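/- arXiv:1905.07225 — 2 statements merged into one kernel-verified Lean document; each statement's English description precedes it below -/
import Mathlib

section
/- For all η,η' ∈ ℂ and all w,x,y,z ∈ ℤ/3ℤ with y ≠ z, one has M^{wx/yz}[ω^{x−w} + η, ω^{w−x} + η'] = J^x · M^{00/yz}[1 + η, 1 + η']. -/
noncomputable def ω : ℂ := Complex.exp (2 * Real.pi * Complex.I / 3)

def J : Matrix (Fin 3) (Fin 3) ℂ := !![0,1,0; 0,0,1; 1,0,0]

noncomputable def W : Matrix (Fin 3) (Fin 3) ℂ := !![1,1,1; 1,ω,ω^2; 1,ω^2,ω]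

/-- generalized cevian operator `S[η,η'] = W ⬝ diag(1,η',η) ⬝ W⁻¹` -/
noncomputable def S (η η' : ℂ) : Matrix (Fin 3) (Fin 3) ℂ :=
  W * Matrix.diagonal ![1, η', η] * W⁻¹

/-- `ω^k` for `k : ZMod 3` (well defined since `ω^3 = 1`). -/
noncomputable def ωz (k : ZMod 3) : ℂ := ω ^ k.val

/-- `J^k` for `k : ZMod 3` (well defined since `J^3 = 1`). -/
def Jz (k : ZMod 3) : Matrix (Fin 3) (Fin 3) ℂ := J ^ k.val

/-- generalized median operator `M^{wx/yz}[η,η']` -/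
noncomputable def M (η η' : ℂ) (w x y z : ZMod 3) : Matrix (Fin 3) (Fin 3) ℂ :=
  S ((η * ωz (-x) - ωz (-w)) / (ωz (-z) - ωz (-y)))
    ((η' * ωz x - ωz w) / (ωz z - ωz y))

/-!
The columns of `W` are eigenvectors of `J` with eigenvalues `1, ω, ω⁻¹`, so left multiplication by
`J^x` rescales the parameters of a cevian operator by `ω^{-x}` and `ω^x`. The shifts `ω^{x-w}` and
`ω^{w-x}` are exactly what cancels the constant terms in the parameters of `M^{wx/yz}`: what remains
is `η ω^{-x}` and `η' ω^x` over denominators depending only on `y` and `z`.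
-/

theorem ω_pow_three : ω ^ 3 = 1 := by
  simpa [ω] using (Complex.isPrimitiveRoot_exp 3 three_ne_zero).pow_eq_one

theorem ωz_eq_zmodChar (k : ZMod 3) : ωz k = AddChar.zmodChar 3 ω_pow_three k := rfl

theorem ωz_zero : ωz 0 = 1 := by
  rw [ωz_eq_zmodChar, AddChar.map_zero_eq_one]

theorem ωz_add (k l : ZMod 3) : ωz (k + l) = ωz k * ωz l := by
  simp only [ωz_eq_zmodChar, AddChar.map_add_eq_mul]

theorem ωz_neg (k : ZMod 3) : ωz (-k) = (ωz k)⁻¹ := by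
  simp only [ωz_eq_zmodChar, AddChar.map_neg_eq_inv]

theorem J_mul_W : J * W = W * Matrix.diagonal ![1, ω, ω⁻¹] := by
  have h_inv : ω⁻¹ = ω ^ 2 := inv_eq_of_mul_eq_one_right (by rw [← pow_succ', ω_pow_three])
  have h_cube := ω_pow_three
  rw [h_inv]
  ext i j
  fin_cases i <;> fin_cases j <;>
    simp [J, W, Matrix.mul_apply, Fin.sum_univ_three] <;> grind

theorem J_pow_mul_W (n : ℕ) :
    J ^ n * W = W * Matrix.diagonal ![1, ω ^ n, (ω ^ n)⁻¹] := by
  have h_eigenvalues : (![1, ω, ω⁻¹] : Fin 3 → ℂ) ^ n = ![1, ω ^ n, (ω ^ n)⁻¹] := by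
    ext i
    fin_cases i <;> simp
  have h_semiconj : SemiconjBy W (Matrix.diagonal ![1, ω, ω⁻¹]) J := J_mul_W.symm
  rw [← h_eigenvalues, ← Matrix.diagonal_pow]
  exact (h_semiconj.pow_right n).eq.symm

theorem Jz_mul_W (k : ZMod 3) :
    Jz k * W = W * Matrix.diagonal ![1, ωz k, ωz (-k)] := by
  rw [ωz_neg]
  exact J_pow_mul_W k.val

theorem mul_S_of_mul_W_eq {A : Matrix (Fin 3) (Fin 3) ℂ} {ζ ζ' : ℂ}
    (hA : A * W = W * Matrix.diagonal ![1, ζ', ζ]) (η η' : ℂ) :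
    A * S η η' = S (ζ * η) (ζ' * η') := by
  have h_diag : Matrix.diagonal ![1, ζ', ζ] * Matrix.diagonal ![1, η', η] =
      Matrix.diagonal ![1, ζ' * η', ζ * η] := by
    rw [Matrix.diagonal_mul_diagonal]
    congr 1
    ext i
    fin_cases i <;> simp
  calc A * S η η' = A * W * Matrix.diagonal ![1, η', η] * W⁻¹ := by
        simp only [S, mul_assoc]
    _ = W * (Matrix.diagonal ![1, ζ', ζ] * Matrix.diagonal ![1, η', η]) * W⁻¹ := by
        rw [hA, mul_assoc W]
    _ = S (ζ * η) (ζ' * η') := by rw [h_diag, S]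

theorem Jz_mul_S (k : ZMod 3) (η η' : ℂ) :
    Jz k * S η η' = S (ωz (-k) * η) (ωz k * η') :=
  mul_S_of_mul_W_eq (Jz_mul_W k) η η'

theorem M_ωz_add (η η' : ℂ) (w x y z : ZMod 3) :
    M (ωz (x - w) + η) (ωz (w - x) + η') w x y z =
      S (ωz (-x) * (η / (ωz (-z) - ωz (-y)))) (ωz x * (η' / (ωz z - ωz y))) := by
  have h_shift : ωz (x - w) * ωz (-x) = ωz (-w) := by
    rw [← ωz_add, sub_add_eq_add_sub, add_neg_cancel, zero_sub]
  have h_shift' : ωz (w - x) * ωz x = ωz w := by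
    rw [← ωz_add, sub_add_cancel]
  rw [M, add_mul, add_mul, h_shift, h_shift', add_sub_cancel_left, add_sub_cancel_left,
    mul_comm η, mul_comm η', mul_div_assoc, mul_div_assoc]

theorem M_one_add (η η' : ℂ) (y z : ZMod 3) :
    M (1 + η) (1 + η') 0 0 y z = S (η / (ωz (-z) - ωz (-y))) (η' / (ωz z - ωz y)) := by
  simpa only [sub_zero, neg_zero, ωz_zero, one_mul] using M_ωz_add η η' 0 0 y z

theorem median_shift_formula (η η' : ℂ) (w x y z : ZMod 3) (hyz : y ≠ z) :
    M (ωz (x - w) + η) (ωz (w - x) + η') w x y z =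
      Jz x * M (1 + η) (1 + η') 0 0 y z := by
  rw [M_ωz_add, M_one_add, Jz_mul_S]
end

section
/- Let η,η' ∈ ℂ. The operator S[η,η'] commutes with all real affine transformations of the plane — i.e., for every λ,μ,ν ∈ ℂ and every (a,b,c) ∈ ℂ³, applying S[η,η'] to (f(a),f(b),f(c)) equals applying f componentwise to S[η,η']·(a,b,c)ᵀ, where f(z) = λz + μ·conj(z) + ν — if and only if η' = conj(η). -/
/-!
A complex matrix commutes with every map `z ↦ l * z + m * conj z + ν` exactly when its entries are
real (test `conj` on the standard basis) and its rows sum to `1` (test a constant translation).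
The first column of `W` is the constant vector `1`, with eigenvalue `1`, so the rows of `S[η,η']`
always sum to `1`. Conjugation swaps `ω` and `ω²`, that is, the last two columns of `W`, so it
carries `S[η,η']` to `S[conj η', conj η]`. As `S[η,η']` determines its eigenvalues, it is real if
and only if `η' = conj η`.
-/

open Matrix

section SemiAffine

variable {m n R : Type*} [Fintype n] [CommSemiring R] {f : R →+* R}

theorem mulVec_comp_of_map_eq {A : Matrix m n R} (hA : A.map f = A) (v : n → R) :
    A *ᵥ (f ∘ v) = f ∘ (A *ᵥ v) := by
  ext i
  rw [Function.comp_apply, RingHom.map_mulVec, hA]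

theorem map_eq_of_mulVec_comp {A : Matrix m n R}
    (hA : ∀ v, A *ᵥ (f ∘ v) = f ∘ (A *ᵥ v)) : A.map f = A := by
  classical
  ext i j
  have basis_fixed : f ∘ Pi.single j 1 = (Pi.single j 1 : n → R) := by
    ext k
    simp [Pi.single_apply, apply_ite f]
  have h := congrFun (hA (Pi.single j 1)) i
  rw [basis_fixed] at h
  simpa using h.symm

theorem mulVec_semiaffine_comm_iff {A : Matrix m n R} :
    (∀ l μ ν : R, ∀ v : n → R,
      A *ᵥ (fun j => l * v j + μ * f (v j) + ν) =
        fun i => l * (A *ᵥ v) i + μ * f ((A *ᵥ v) i) + ν) ↔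
    A.map f = A ∧ A *ᵥ 1 = 1 := by
  constructor
  · intro h
    refine ⟨map_eq_of_mulVec_comp fun v => ?_, ?_⟩
    · simpa [Function.comp_def] using h 0 1 0 v
    · simpa [Pi.one_def] using h 0 0 1 0
  · rintro ⟨hmap, hone⟩ l μ ν v
    calc A *ᵥ (fun j => l * v j + μ * f (v j) + ν)
        = A *ᵥ (l • v + μ • (f ∘ v) + ν • 1) := by
          congr 1
          ext j
          simp
      _ = l • (A *ᵥ v) + μ • (f ∘ (A *ᵥ v)) + ν • 1 := by
          simp only [mulVec_add, mulVec_smul, mulVec_comp_of_map_eq hmap, hone]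
      _ = _ := by
          ext i
          simp

end SemiAffine

section Diagonalization

variable {n R : Type*} [Fintype n] [DecidableEq n] [CommRing R] {P : Matrix n n R}

theorem mul_diagonal_mul_inv_mulVec_col (hP : IsUnit P.det) (d : n → R) (j : n) :
    (P * diagonal d * P⁻¹) *ᵥ P.col j = d j • P.col j := by
  calc (P * diagonal d * P⁻¹) *ᵥ P.col j
      = (P * diagonal d) *ᵥ Pi.single j 1 := by
        rw [← mulVec_single_one, mulVec_mulVec, nonsing_inv_mul_cancel_right _ _ hP]
    _ = P *ᵥ (d j • Pi.single j 1) := by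
        rw [← mulVec_mulVec, diagonal_mulVec_single, ← Pi.single_smul, smul_eq_mul]
    _ = d j • P.col j := by
        rw [mulVec_smul, mulVec_single_one]

theorem mul_diagonal_mul_inv_injective (hP : IsUnit P.det) :
    Function.Injective fun d : n → R => P * diagonal d * P⁻¹ := by
  have hP' : IsUnit P := (isUnit_iff_isUnit_det P).2 hP
  have hPinv : IsUnit P⁻¹ := isUnit_nonsing_inv_iff.2 hP'
  exact fun d e h => diagonal_injective (hP'.mul_left_cancel (hPinv.mul_right_cancel h))

theorem map_nonsing_inv_of_isUnit_det {R' : Type*} [CommRing R'] (f : R →+* R')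
    (hP : IsUnit P.det) : P⁻¹.map f = (P.map f)⁻¹ := by
  refine (inv_eq_right_inv ?_).symm
  rw [← Matrix.map_mul, mul_nonsing_inv P hP, Matrix.map_one f (map_zero f) (map_one f)]

theorem map_mul_diagonal_mul_inv (hP : IsUnit P.det) {f : R →+* R} {σ : Equiv.Perm n}
    (hσ : P.map f = P.submatrix id σ) (d : n → R) :
    (P * diagonal d * P⁻¹).map f = P * diagonal (f ∘ d ∘ σ.symm) * P⁻¹ := by
  have hinv : (P.submatrix id σ)⁻¹ = P⁻¹.submatrix σ id := inv_submatrix_equiv P (.refl n) σ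
  have hdiag : diagonal (f ∘ d) = (diagonal (f ∘ d ∘ σ.symm)).submatrix σ σ := by
    rw [submatrix_diagonal_equiv]
    simp [Function.comp_assoc]
  calc (P * diagonal d * P⁻¹).map f
      = P.submatrix id σ * diagonal (f ∘ d) * (P.submatrix id σ)⁻¹ := by
        rw [Matrix.map_mul, Matrix.map_mul, map_nonsing_inv_of_isUnit_det f hP, hσ,
          diagonal_map (map_zero f)]
        rfl
    _ = P * diagonal (f ∘ d ∘ σ.symm) * P⁻¹ := by
        rw [hinv, hdiag, submatrix_mul_equiv, submatrix_mul_equiv, submatrix_id_id]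

end Diagonalization

theorem det_vandermonde_pow_ne_zero {R : Type*} [CommRing R] [IsDomain R] {n : ℕ} {ζ : R}
    (hζ : IsPrimitiveRoot ζ n) : (vandermonde fun i : Fin n => ζ ^ (i : ℕ)).det ≠ 0 :=
  det_vandermonde_ne_zero_iff.2 fun i j h => Fin.ext (hζ.pow_inj i.is_lt j.is_lt h)

theorem isPrimitiveRoot_ω : IsPrimitiveRoot ω 3 :=
  Complex.isPrimitiveRoot_exp 3 three_ne_zero

theorem ω_sq_sq : (ω ^ 2) ^ 2 = ω := by
  linear_combination ω * isPrimitiveRoot_ω.pow_eq_one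

theorem conj_ω : starRingEnd ℂ ω = ω ^ 2 := by
  rw [← Complex.inv_eq_conj (isPrimitiveRoot_ω.norm'_eq_one three_ne_zero)]
  exact inv_eq_of_mul_eq_one_right (by rw [← pow_succ', isPrimitiveRoot_ω.pow_eq_one])

theorem W_eq_vandermonde : W = vandermonde fun i : Fin 3 => ω ^ (i : ℕ) := by
  ext i j
  fin_cases i <;> fin_cases j <;> simp [W, vandermonde_apply, ω_sq_sq]

theorem isUnit_det_W : IsUnit W.det := by
  rw [isUnit_iff_ne_zero, W_eq_vandermonde]
  exact det_vandermonde_pow_ne_zero isPrimitiveRoot_ω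

theorem W_map_conj : W.map (starRingEnd ℂ) = W.submatrix id (Equiv.swap 1 2) := by
  ext i j
  fin_cases i <;> fin_cases j <;>
    simp [W, conj_ω, ω_sq_sq, Equiv.swap_apply_of_ne_of_ne]

theorem S_mulVec_one (η η' : ℂ) : S η η' *ᵥ 1 = 1 := by
  have W_col_zero : W.col 0 = 1 := by
    ext i
    fin_cases i <;> rfl
  simpa [S, W_col_zero] using mul_diagonal_mul_inv_mulVec_col isUnit_det_W ![1, η', η] 0

theorem S_map_conj (η η' : ℂ) :
    (S η η').map (starRingEnd ℂ) = S (starRingEnd ℂ η') (starRingEnd ℂ η) := by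
  have swap_eigenvalues : starRingEnd ℂ ∘ ![1, η', η] ∘ (Equiv.swap 1 2).symm =
      ![1, starRingEnd ℂ η, starRingEnd ℂ η'] := by
    ext i
    fin_cases i <;> simp [Equiv.swap_apply_of_ne_of_ne]
  rw [S, map_mul_diagonal_mul_inv isUnit_det_W W_map_conj, swap_eigenvalues, S]

theorem S_inj {η η' ξ ξ' : ℂ} : S η η' = S ξ ξ' ↔ η = ξ ∧ η' = ξ' := by
  rw [S, S, (mul_diagonal_mul_inv_injective isUnit_det_W).eq_iff]
  simp [and_comm]

theorem cevian_commutes_with_real_affine_iff (η η' : ℂ) :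
    (∀ l m ν : ℂ, ∀ Δ : Fin 3 → ℂ,
      (S η η').mulVec (fun i => l * Δ i + m * (starRingEnd ℂ) (Δ i) + ν) =
        fun i => l * ((S η η').mulVec Δ i) + m * (starRingEnd ℂ) ((S η η').mulVec Δ i) + ν)
    ↔ η' = (starRingEnd ℂ) η := by
  rw [mulVec_semiaffine_comm_iff, S_map_conj, S_inj, and_iff_left (S_mulVec_one η η')]
  constructor
  · rintro ⟨-, h⟩
    exact h.symm
  · rintro rfl
    exact ⟨Complex.conj_conj η, rfl⟩
end
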